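/- Define σ_{A₂}(τ, z₁, z₂) := θ(τ,z₁)·θ(τ,z₂)·θ(τ,z₁+z₂)/η(τ) on ℍ × ℂ². Then σ_{A₂} is a holomorphic Jacobi form of singular weight 1 and index 1 for the lattice A₂ (realized as ℤ² with Gram matrix S = (2,1;1,2)) with character v_η^8 and trivial Heisenberg character. Explicitly: (i) σ_{A₂}((aτ+b)/(cτ+d), z₁/(cτ+d), z₂/(cτ+d)) = v_η^8(A)·(cτ+d)·exp(πi c(2z₁²+2z₁z₂+2z₂²)/(cτ+d))·σ_{A₂}(τ,z₁,z₂) for all A = (a,b;c,d) ∈ SL₂(ℤ); (ii) σ_{A₂}(τ, z₁+x₁τ+y₁, z₂+x₂τ+y₂) = exp(−πi((2x₁²+2x₁x₂+2x₂²)τ + 2(2x₁+x₂)z₁ + 2(x₁+2x₂)z₂))·σ_{A₂}(τ,z₁,z₂) for all x₁,x₂,y₁,y₂ ∈ ℤ; (iii) σ_{A₂} is holomorphic on ℍ×ℂ² and its Fourier expansion σ_{A₂}(τ,z) = Σ c(n,ℓ)·exp(2πi(nτ+ℓ₁z₁+ℓ₂z₂)) is supported on n ≥ 0 with 2n = ℓᵀS^{−1}ℓ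 = (2ℓ₁² − 2ℓ₁ℓ₂ + 2ℓ₂²)/3 whenever c(n,ℓ) ≠ 0 (singular weight). -/

import Mathlib

open Complex Matrix
open scoped Real BigOperators Classical

noncomputable section

abbrev SL2Z := Matrix.SpecialLinearGroup (Fin 2) ℤ

/-- The integral bilinear form attached to a Gram matrix `S`. -/
def bilinZ {ι : Type*} [Fintype ι] (S : Matrix ι ι ℤ) (x y : ι → ℤ) : ℤ :=
  ∑ i, ∑ j, x i * S i j * y j

def bilinQ {ι : Type*} [Fintype ι] (S : Matrix ι ι ℤ) (x y : ι → ℚ) : ℚ :=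
  ∑ i, ∑ j, x i * (S i j : ℚ) * y j

def bilinR {ι : Type*} [Fintype ι] (S : Matrix ι ι ℤ) (x y : ι → ℝ) : ℝ :=
  ∑ i, ∑ j, x i * (S i j : ℝ) * y j

def bilinC {ι : Type*} [Fintype ι] (S : Matrix ι ι ℤ) (x y : ι → ℂ) : ℂ :=
  ∑ i, ∑ j, x i * (S i j : ℂ) * y j

/-- `S` is the Gram matrix of an even positive definite lattice. -/
structure IsEvenPosDef {ι : Type*} [Fintype ι] (S : Matrix ι ι ℤ) : Prop where
  symm : S.IsSymm
  posdef : ∀ x : ι → ℚ, x ≠ 0 → 0 < bilinQ S x x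
  even_diag : ∀ i, (2 : ℤ) ∣ S i i

/-- `l ∈ (1/2) L^∨`, written in lattice coordinates:  `2(l,x) ∈ ℤ` for every lattice vector. -/
def InHalfDual {ι : Type*} [Fintype ι] (S : Matrix ι ι ℤ) (l : ι → ℚ) : Prop :=
  ∀ x : ι → ℤ, ∃ m : ℤ, 2 * bilinQ S l (fun i => (x i : ℚ)) = m

/-- `φ` is a holomorphic Jacobi form of weight `k` and index `t` for the lattice `(ℤ^ι, S)`
with `SL₂(ℤ)`-character (multiplier system) `χ`, Heisenberg character `ν`,
and Fourier coefficients `f`. -/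
structure IsJacobiForm {ι : Type*} [Fintype ι] (S : Matrix ι ι ℤ) (k t : ℚ)
    (χ : SL2Z → ℂ) (ν : (ι → ℤ) → (ι → ℤ) → ℂ)
    (f : ℚ × (ι → ℚ) → ℂ) (φ : ℂ → (ι → ℂ) → ℂ) : Prop where
  holo : DifferentiableOn ℂ (fun p : ℂ × (ι → ℂ) => φ p.1 p.2) {p | 0 < p.1.im}
  modular : ∀ A : SL2Z, ∀ τ : ℂ, 0 < τ.im → ∀ z : ι → ℂ,
    φ (((A.1 0 0 : ℂ) * τ + (A.1 0 1 : ℂ)) / ((A.1 1 0 : ℂ) * τ + (A.1 1 1 : ℂ)))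
        (fun i => z i / ((A.1 1 0 : ℂ) * τ + (A.1 1 1 : ℂ)))
      = χ A * ((A.1 1 0 : ℂ) * τ + (A.1 1 1 : ℂ)) ^ (k : ℂ)
        * Complex.exp ((π : ℂ) * I * (t : ℂ) * (A.1 1 0 : ℂ) * bilinC S z z
            / ((A.1 1 0 : ℂ) * τ + (A.1 1 1 : ℂ)))
        * φ τ z
  elliptic : ∀ x y : ι → ℤ, ∀ τ : ℂ, 0 < τ.im → ∀ z : ι → ℂ,
    φ τ (fun i => z i + (x i : ℂ) * τ + (y i : ℂ))
      = ν x y * Complex.exp (-((π : ℂ) * I * (t : ℂ))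
            * ((bilinZ S x x : ℂ) * τ + 2 * bilinC S (fun i => (x i : ℂ)) z))
        * φ τ z
  support : ∀ p : ℚ × (ι → ℚ), f p ≠ 0 →
    0 ≤ p.1 ∧ InHalfDual S p.2 ∧ 0 ≤ 2 * p.1 * t - bilinQ S p.2 p.2
  expansion : ∀ τ : ℂ, 0 < τ.im → ∀ z : ι → ℂ,
    HasSum (fun p : ℚ × (ι → ℚ) =>
        f p * Complex.exp (2 * (π : ℂ) * I *
          ((p.1 : ℂ) * τ + bilinC S (fun i => (p.2 i : ℂ)) z))) (φ τ z)

/-- The Fourier coefficients `f` are supported on indices of positive hyperbolic norm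
(cusp form condition). -/
def IsCuspSupport {ι : Type*} [Fintype ι] (S : Matrix ι ι ℤ) (t : ℚ)
    (f : ℚ × (ι → ℚ) → ℂ) : Prop :=
  ∀ p : ℚ × (ι → ℚ), f p ≠ 0 → 0 < 2 * p.1 * t - bilinQ S p.2 p.2

/-- `c` is a root of unity. -/
def HasFiniteOrder (c : ℂ) : Prop := ∃ N : ℕ, 0 < N ∧ c ^ N = 1

/-- The quadratic character mod 4. -/
def chi4 (n : ℤ) : ℂ := if n % 4 = 1 then 1 else if n % 4 = 3 then -1 else 0

/-- The classical Jacobi theta-series of characteristic `(1/2,1/2)`. -/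
def jtheta (τ z : ℂ) : ℂ :=
  ∑' n : ℤ, chi4 n *
    Complex.exp (2 * (π : ℂ) * I * (((n : ℂ) ^ 2 * τ) / 8 + (n : ℂ) * z / 2))

/-- The Dedekind eta function. -/
def dedekindEta (τ : ℂ) : ℂ :=
  Complex.exp ((π : ℂ) * I * τ / 12) *
    ∏' n : ℕ, (1 - Complex.exp (2 * (π : ℂ) * I * ((n : ℂ) + 1) * τ))

/-- `σ_{A₂}(τ,z₁,z₂) = θ(τ,z₁)θ(τ,z₂)θ(τ,z₁+z₂)/η(τ)`. -/
def sigmaA2 : ℂ → (Fin 2 → ℂ) → ℂ :=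
  fun τ z => jtheta τ (z 0) * jtheta τ (z 1) * jtheta τ (z 0 + z 1) / dedekindEta τ

/-!
The quotient `θ / η ^ 3` has weight `-1`, index `1 / 2` and trivial character: this is a cocycle
identity, so it suffices to check it on the generators `S` and `T`. Since
`σ = η ^ 8 * (θ / η ^ 3)(z₁) * (θ / η ^ 3)(z₂) * (θ / η ^ 3)(z₁ + z₂)`, it has the character of
`η ^ 8` and the index form `(z₁ ^ 2 + z₂ ^ 2 + (z₁ + z₂) ^ 2) / 2`, which is half the norm of the
lattice `A₂`. Under translation by a lattice vector the signs of the three thetas cancel.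

Collecting the terms of the product of three theta series with the same `exp (2πi(l₁z₁ + l₂z₂))`
leaves a theta constant `∑ m, ± q ^ ((6 * m + r) ^ 2 / 24)` with `r = 3 - 2 * (l₁ + l₂)`. It
vanishes if `3 ∣ r`, and is `± η` otherwise, by the pentagonal number theorem. Division by `η` thus
leaves a single power of `q` for each `l`, the one singular weight requires.
-/

section Pentagonal

lemma natAbs_le_pentagonal (k : ℤ) : k.natAbs ≤ pentagonal k := by
  have h := two_mul_natCast_pentagonal k
  zify
  rcases abs_cases k with ⟨hk, _⟩ | ⟨hk, _⟩ <;> rw [hk]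
  · rcases eq_or_ne k 0 with rfl | hk0
    · positivity
    · have : 1 ≤ k := by omega
      nlinarith
  · nlinarith

variable {K : Type*} [NormedField K] {x : K}

lemma norm_prod_one_sub_pow_le (hx : ‖x‖ < 1) (k n : ℕ) :
    ‖∏ i ∈ Finset.range n, (1 - x ^ (k + i + 1))‖ ≤ Real.exp (1 - ‖x‖)⁻¹ := by
  have factor_le (i : ℕ) : ‖1 - x ^ (k + i + 1)‖ ≤ 1 + ‖x‖ ^ i := calc
    ‖1 - x ^ (k + i + 1)‖ ≤ 1 + ‖x‖ ^ (k + i + 1) := by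
      simpa only [norm_one, norm_pow] using norm_sub_le (1 : K) (x ^ (k + i + 1))
    _ ≤ 1 + ‖x‖ ^ i := by
      gcongr 1 + ?_
      exact pow_le_pow_of_le_one (norm_nonneg x) hx.le (by omega)
  calc ‖∏ i ∈ Finset.range n, (1 - x ^ (k + i + 1))‖
      ≤ ∏ i ∈ Finset.range n, (1 + ‖x‖ ^ i) := by
        rw [norm_prod]
        exact Finset.prod_le_prod (fun _ _ => norm_nonneg _) fun i _ => factor_le i
    _ ≤ Real.exp (∑ i ∈ Finset.range n, ‖x‖ ^ i) :=
        Real.prod_one_add_le_exp_sum _ fun _ => by positivity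
    _ ≤ Real.exp (1 - ‖x‖)⁻¹ := by
        rw [Real.exp_le_exp, ← tsum_geometric_of_lt_one (norm_nonneg x) hx]
        exact (summable_geometric_of_lt_one (norm_nonneg x) hx).sum_le_tsum _
          fun _ _ => by positivity

lemma norm_pow_mul_prod_one_sub_pow_le (hx : ‖x‖ < 1) (k n : ℕ) :
    ‖x ^ ((k + 1) * n) * ∏ i ∈ Finset.range (n + 1), (1 - x ^ (k + i + 1))‖
      ≤ ‖x‖ ^ n * Real.exp (1 - ‖x‖)⁻¹ := by
  rw [norm_mul, norm_pow]
  gcongr ?_ * ?_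
  · exact pow_le_pow_of_le_one (norm_nonneg x) hx.le (Nat.le_mul_of_pos_left n k.succ_pos)
  · exact norm_prod_one_sub_pow_le hx k _

lemma tendsto_pentagonal_tail (hx : ‖x‖ < 1) :
    Filter.Tendsto (fun k : ℕ => (-1) ^ (k + 1) * x ^ ((k + 1) * (3 * k + 4) / 2) *
      ∑' n : ℕ, x ^ ((k + 1) * n) * ∏ i ∈ Finset.range (n + 1), (1 - x ^ (k + i + 1)))
      Filter.atTop (nhds 0) := by
  have geometric := summable_geometric_of_lt_one (norm_nonneg x) hx
  set C := (∑' n, ‖x‖ ^ n) * Real.exp (1 - ‖x‖)⁻¹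
  have bound_tendsto : Filter.Tendsto (fun k : ℕ => ‖x‖ ^ k * C) Filter.atTop (nhds 0) := by
    simpa only [zero_mul] using
      (tendsto_pow_atTop_nhds_zero_of_lt_one (norm_nonneg x) hx).mul_const C
  refine squeeze_zero_norm (fun k => ?_) bound_tendsto
  rw [norm_mul, norm_mul, norm_pow, norm_neg, norm_one, one_pow, one_mul, norm_pow]
  gcongr ?_ * ?_
  · refine pow_le_pow_of_le_one (norm_nonneg x) hx.le ?_
    rw [Nat.le_div_iff_mul_le two_pos]
    nlinarith
  · exact tsum_of_norm_bounded (geometric.hasSum.mul_right _)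
      (norm_pow_mul_prod_one_sub_pow_le hx k)

variable [CompleteSpace K]

lemma summable_neg_one_pow_mul_pow {e : ℕ → ℕ} (hx : ‖x‖ < 1) (he : ∀ n, n ≤ e n) :
    Summable fun n : ℕ => (-1) ^ n * x ^ e n := by
  refine .of_norm_bounded (summable_geometric_of_lt_one (norm_nonneg x) hx) fun n => ?_
  rw [norm_mul, norm_pow, norm_neg, norm_one, one_pow, one_mul, norm_pow]
  exact pow_le_pow_of_le_one (norm_nonneg x) hx.le (he n)

lemma summable_neg_one_pow_mul_pow_pentagonal_neg (hx : ‖x‖ < 1) :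
    Summable fun n : ℕ => (-1) ^ n * x ^ pentagonal (-n) :=
  summable_neg_one_pow_mul_pow hx fun n => by simpa using natAbs_le_pentagonal (-n)

lemma summable_neg_one_pow_mul_pow_pentagonal_add_one (hx : ‖x‖ < 1) :
    Summable fun n : ℕ => (-1) ^ n * x ^ pentagonal (n + 1) :=
  summable_neg_one_pow_mul_pow hx fun n => by have := natAbs_le_pentagonal (n + 1); omega

lemma tprod_one_sub_pow_eq_tsum_pentagonal (hx : ‖x‖ < 1) :
    ∏' n : ℕ, (1 - x ^ (n + 1)) =
      ∑' n : ℕ, (-1) ^ n * (x ^ pentagonal (-n) - x ^ pentagonal (n + 1)) := by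
  have geometric := summable_geometric_of_lt_one (norm_nonneg x) hx
  refine Pentagonal.tprod_one_sub_pow (tendsto_pow_atTop_nhds_zero_of_norm_lt_one hx)
    (fun k => .of_norm_bounded (geometric.mul_right _) (norm_pow_mul_prod_one_sub_pow_le hx k))
    (fun k => ?_) ?_ (tendsto_pentagonal_tail hx)
  · simp only [sub_eq_add_neg]
    refine multipliable_one_add_of_summable ?_
    simpa only [norm_neg, norm_pow, add_assoc] using (summable_nat_add_iff (k + 1)).mpr geometric
  · simpa only [mul_sub] using (summable_neg_one_pow_mul_pow_pentagonal_neg hx).sub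
      (summable_neg_one_pow_mul_pow_pentagonal_add_one hx)

theorem hasSum_neg_one_zpow_mul_pow_pentagonal (hx : ‖x‖ < 1) :
    HasSum (fun k : ℤ => (-1) ^ k * x ^ pentagonal k) (∏' n : ℕ, (1 - x ^ (n + 1))) := by
  have sum_nonneg := (summable_neg_one_pow_mul_pow_pentagonal_neg hx).hasSum
  have sum_neg := (summable_neg_one_pow_mul_pow_pentagonal_add_one hx).hasSum
  rw [tprod_one_sub_pow_eq_tsum_pentagonal hx, ← (Equiv.neg ℤ).hasSum_iff]
  simp only [mul_sub, sum_nonneg.summable.tsum_sub sum_neg.summable]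
  rw [sub_eq_add_neg]
  refine HasSum.of_nat_of_neg_add_one (sum_nonneg.congr_fun fun n => ?_)
    (sum_neg.neg.congr_fun fun n => ?_)
  · simp [← inv_pow]
  · simp [zpow_add₀]

end Pentagonal

section Sign

lemma neg_one_zpow_congr {K : Type*} [DivisionRing K] {m n : ℤ} (h : Even (m - n)) :
    (-1 : K) ^ m = (-1) ^ n := by
  rw [← sub_add_cancel m n, zpow_add₀ (neg_ne_zero.mpr one_ne_zero), h.neg_one_zpow, one_mul]

lemma exp_eq_neg_one_zpow_mul_exp {a b : ℂ} {n : ℤ} (h : a = n * (π * I) + b) :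
    cexp a = (-1) ^ n * cexp b := by
  rw [h, Complex.exp_add, Complex.exp_int_mul, Complex.exp_pi_mul_I]

end Sign

section DedekindEta

lemma dedekindEta_eq_eta (τ : ℂ) : dedekindEta τ = ModularForm.eta τ := by
  unfold dedekindEta ModularForm.eta
  congr 1
  · rw [Function.Periodic.qParam]
    push_cast
    ring_nf
  · exact tprod_congr fun n => by rw [ModularForm.eta_q_eq_cexp]

variable {τ : ℂ}

lemma dedekindEta_ne_zero (hτ : 0 < τ.im) : dedekindEta τ ≠ 0 := by
  rw [dedekindEta_eq_eta]
  exact ModularForm.eta_ne_zero hτ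

lemma differentiableAt_dedekindEta (hτ : 0 < τ.im) : DifferentiableAt ℂ dedekindEta τ := by
  rw [funext dedekindEta_eq_eta]
  exact ModularForm.differentiableAt_eta_of_mem_upperHalfPlaneSet hτ

lemma dedekindEta_add_one (τ : ℂ) :
    dedekindEta (τ + 1) = cexp (π * I / 12) * dedekindEta τ := by
  unfold dedekindEta
  rw [← mul_assoc, ← Complex.exp_add]
  congr 2
  · ring
  · funext n
    rw [sub_right_inj, Complex.exp_eq_exp_iff_exists_int]
    exact ⟨n + 1, by push_cast; ring⟩

lemma log_neg_I_mul (hτ : 0 < τ.im) : log (-I * τ) = log τ - log I := by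
  have hτ0 : τ ≠ 0 := by rintro rfl; simp at hτ
  have arg_bounds : (-I).arg + τ.arg ∈ Set.Ioc (-π) π := by
    rw [Complex.arg_neg_I]
    constructor <;> linarith [Complex.arg_nonneg_iff.mpr hτ.le, Complex.arg_le_pi τ, Real.pi_pos]
  rw [(Complex.log_mul_eq_add_log_iff (by simp) hτ0).mpr arg_bounds, Complex.log_neg_I,
    Complex.log_I]
  ring

lemma dedekindEta_neg_one_div (hτ : 0 < τ.im) :
    dedekindEta (-1 / τ) = (-I * τ) ^ (1 / 2 : ℂ) * dedekindEta τ := by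
  have hτ0 : τ ≠ 0 := by rintro rfl; simp at hτ
  have eta_inv : ModularForm.eta (-1 / τ) = (sqrt I)⁻¹ * (sqrt τ * ModularForm.eta τ) := by
    simpa using ModularForm.eta_comp_eq_csqrt_I_inv hτ
  rw [dedekindEta_eq_eta, dedekindEta_eq_eta, eta_inv, ← mul_assoc, sqrt_eq_exp I_ne_zero,
    sqrt_eq_exp hτ0, Complex.cpow_def_of_ne_zero (by simp [hτ0]), log_neg_I_mul hτ,
    ← Complex.exp_neg, ← Complex.exp_add]
  congr 2
  ring

end DedekindEta

section AlternatingTheta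

/-- The term of `alternatingTheta`. -/
def alternatingThetaTerm (r : ℤ) (τ : ℂ) (m : ℤ) : ℂ :=
  (-1) ^ m * cexp (π * I * (6 * m + r) ^ 2 * τ / 12)

/-- The theta constant `∑ m, (-1) ^ m * q ^ ((6 * m + r) ^ 2 / 24)`, `q = exp (2 * π * I * τ)`,
attached to the residue class of `r` modulo `6`. -/
def alternatingTheta (r : ℤ) (τ : ℂ) : ℂ := ∑' m : ℤ, alternatingThetaTerm r τ m

lemma alternatingTheta_neg (r : ℤ) (τ : ℂ) : alternatingTheta (-r) τ = alternatingTheta r τ := by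
  refine ((Equiv.neg ℤ).tsum_eq _).symm.trans (tsum_congr fun m => ?_)
  simp only [alternatingThetaTerm, Equiv.neg_apply]
  rw [neg_one_zpow_congr (n := m) ⟨-m, by ring⟩]
  push_cast
  ring_nf

lemma alternatingTheta_add_six_mul (r k : ℤ) (τ : ℂ) :
    alternatingTheta (r + 6 * k) τ = (-1) ^ k * alternatingTheta r τ := by
  unfold alternatingTheta
  rw [← tsum_mul_left, ← (Equiv.addRight k).tsum_eq (fun m => _ * alternatingThetaTerm r τ m)]
  refine tsum_congr fun m => ?_
  simp only [alternatingThetaTerm, Equiv.coe_addRight]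
  rw [← mul_assoc, ← zpow_add₀ (by norm_num),
    neg_one_zpow_congr (m := k + (m + k)) (n := m) ⟨k, by ring⟩]
  push_cast
  ring_nf

lemma alternatingTheta_three (τ : ℂ) : alternatingTheta 3 τ = 0 := by
  have antiperiodic := alternatingTheta_add_six_mul (-3) 1 τ
  rw [alternatingTheta_neg] at antiperiodic
  norm_num at antiperiodic
  linear_combination antiperiodic / 2

lemma alternatingThetaTerm_neg_one (τ : ℂ) (k : ℤ) : alternatingThetaTerm (-1) τ k =
    cexp (π * I * τ / 12) * ((-1) ^ k * cexp (2 * π * I * τ) ^ pentagonal k) := by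
  have pentagonal_eq : (2 * pentagonal k : ℂ) = k * (3 * k - 1) := by
    exact_mod_cast two_mul_natCast_pentagonal k
  rw [alternatingThetaTerm, mul_left_comm, ← Complex.exp_nat_mul, ← Complex.exp_add]
  congr 2
  push_cast
  linear_combination -(π * I * τ) * pentagonal_eq

lemma dedekindEta_eq_mul_tprod (τ : ℂ) : dedekindEta τ =
    cexp (π * I * τ / 12) * ∏' n : ℕ, (1 - cexp (2 * π * I * τ) ^ (n + 1)) := by
  unfold dedekindEta
  congr 2 with n
  rw [← Complex.exp_nat_mul]
  push_cast
  ring_nf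

lemma alternatingTheta_one {τ : ℂ} (hτ : 0 < τ.im) : alternatingTheta 1 τ = dedekindEta τ := by
  have norm_q_lt_one := UpperHalfPlane.norm_exp_two_pi_I_lt_one ⟨τ, hτ⟩
  rw [← alternatingTheta_neg, alternatingTheta, dedekindEta_eq_mul_tprod,
    ← (hasSum_neg_one_zpow_mul_pow_pentagonal norm_q_lt_one).tsum_eq, ← tsum_mul_left]
  exact tsum_congr (alternatingThetaTerm_neg_one τ)

lemma neg_one_zpow_mul_alternatingTheta {τ : ℂ} (hτ : 0 < τ.im) (s : ℤ) :
    (-1) ^ s * alternatingTheta (3 - 2 * s) τ = -legendreSym 3 s * dedekindEta τ := by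
  have periodic (r k : ℤ) : (-1 : ℂ) ^ (3 * k + r) * alternatingTheta (3 - 2 * (3 * k + r)) τ =
      (-1) ^ r * alternatingTheta (3 - 2 * r) τ := by
    rw [show 3 - 2 * (3 * k + r) = 3 - 2 * r + 6 * (-k) by ring, alternatingTheta_add_six_mul,
      ← mul_assoc, ← zpow_add₀ (by norm_num), neg_one_zpow_congr (n := r) ⟨k, by ring⟩]
  have legendre_add (r k : ℤ) : legendreSym 3 (3 * k + r) = legendreSym 3 r := by
    rw [legendreSym.mod, legendreSym.mod 3 r, Nat.cast_ofNat, Int.mul_add_emod_self_left]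
  obtain ⟨k, rfl | rfl | rfl⟩ : ∃ k, s = 3 * k + 0 ∨ s = 3 * k + 1 ∨ s = 3 * k + 2 :=
    ⟨s / 3, by omega⟩ <;> rw [periodic, legendre_add]
  · simp [alternatingTheta_three, legendreSym]
  · simp [alternatingTheta_one hτ, legendreSym]
  · have alternatingTheta_neg_one : alternatingTheta (-1) τ = dedekindEta τ := by
      rw [alternatingTheta_neg, alternatingTheta_one hτ]
    have legendreSym_two : legendreSym 3 2 = -1 := by decide
    simp [alternatingTheta_neg_one, legendreSym_two]

end AlternatingTheta

section JacobiTheta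

/-- The term of index `n = 2 * m + 1` of the series `jtheta`, whose terms of even index vanish. -/
def jthetaTerm (τ z : ℂ) (m : ℤ) : ℂ :=
  (-1) ^ m * cexp (π * I * ((2 * m + 1) ^ 2 * τ / 4 + (2 * m + 1) * z))

lemma chi4_two_mul_add_one (m : ℤ) : chi4 (2 * m + 1) = (-1) ^ m := by
  obtain ⟨k, rfl | rfl⟩ := Int.even_or_odd' m
  · rw [(even_two_mul k).neg_one_zpow, chi4, if_pos (by omega)]
  · rw [(odd_two_mul_add_one k).neg_one_zpow, chi4, if_neg (by omega), if_pos (by omega)]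

lemma chi4_two_mul (m : ℤ) : chi4 (2 * m) = 0 := by
  rw [chi4, if_neg (by omega), if_neg (by omega)]

lemma jtheta_eq_tsum (τ z : ℂ) : jtheta τ z = ∑' m : ℤ, jthetaTerm τ z m := by
  have odd_injective : Function.Injective fun m : ℤ => 2 * m + 1 := fun a b h => by
    simpa using h
  rw [jtheta, ← odd_injective.tsum_eq]
  · refine tsum_congr fun m => ?_
    rw [chi4_two_mul_add_one, jthetaTerm]
    push_cast
    ring_nf
  · intro n hn
    obtain ⟨m, rfl | rfl⟩ := Int.even_or_odd' n
    · simp [chi4_two_mul] at hn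
    · exact ⟨m, rfl⟩

lemma jthetaTerm_eq_jacobiTheta₂_term (τ z : ℂ) (m : ℤ) : jthetaTerm τ z m =
    cexp (π * I * (τ / 4 + z)) * jacobiTheta₂_term m (z + τ / 2 + 1 / 2) τ := by
  rw [jacobiTheta₂_term, ← Complex.exp_add, jthetaTerm]
  exact (exp_eq_neg_one_zpow_mul_exp (by ring)).symm

lemma jtheta_eq_jacobiTheta₂ (τ z : ℂ) : jtheta τ z =
    cexp (π * I * (τ / 4 + z)) * jacobiTheta₂ (z + τ / 2 + 1 / 2) τ := by
  rw [jtheta_eq_tsum, jacobiTheta₂, ← tsum_mul_left]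
  exact tsum_congr (jthetaTerm_eq_jacobiTheta₂_term τ z)

lemma hasSum_jtheta {τ : ℂ} (hτ : 0 < τ.im) (z : ℂ) : HasSum (jthetaTerm τ z) (jtheta τ z) := by
  have summable : Summable (jthetaTerm τ z) := by
    rw [funext (jthetaTerm_eq_jacobiTheta₂_term τ z)]
    exact ((summable_jacobiTheta₂_term_iff _ τ).mpr hτ).mul_left _
  simpa only [jtheta_eq_tsum] using summable.hasSum

lemma differentiableAt_jtheta {τ : ℂ} (hτ : 0 < τ.im) (z : ℂ) :
    DifferentiableAt ℂ (fun p : ℂ × ℂ => jtheta p.1 p.2) (τ, z) := by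
  simp only [jtheta_eq_jacobiTheta₂]
  refine DifferentiableAt.mul (by fun_prop) ?_
  exact (hasFDerivAt_jacobiTheta₂ _ hτ).differentiableAt.comp (τ, z)
    (f := fun p : ℂ × ℂ => (p.2 + p.1 / 2 + 1 / 2, p.1)) (by fun_prop)

lemma jtheta_add_one (τ z : ℂ) : jtheta (τ + 1) z = cexp (π * I / 4) * jtheta τ z := by
  rw [jtheta_eq_tsum, jtheta_eq_tsum, ← tsum_mul_left]
  refine tsum_congr fun m => ?_
  obtain ⟨k, hk⟩ := Int.even_mul_succ_self m
  have hk : (m : ℂ) * (m + 1) = k + k := by exact_mod_cast hk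
  rw [jthetaTerm, jthetaTerm, mul_left_comm, ← Complex.exp_add]
  congr 1
  rw [Complex.exp_eq_exp_iff_exists_int]
  exact ⟨k, by linear_combination (π * I) * hk⟩

lemma jtheta_add_intCast_mul_add_intCast (τ z : ℂ) (x y : ℤ) : jtheta τ (z + x * τ + y) =
    (-1) ^ (x + y) * cexp (-(π * I) * (x ^ 2 * τ + 2 * x * z)) * jtheta τ z := by
  rw [jtheta_eq_tsum, jtheta_eq_tsum, ← tsum_mul_left, ← (Equiv.subRight x).tsum_eq]
  refine tsum_congr fun m => ?_
  have sign : (-1 : ℂ) ^ (m - x) * (-1) ^ ((2 * (m - x) + 1) * y) = (-1) ^ (x + y) * (-1) ^ m := by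
    simp only [← zpow_add₀ (neg_ne_zero.mpr (one_ne_zero (α := ℂ)))]
    exact neg_one_zpow_congr ⟨(m - x) * y - x, by ring⟩
  rw [Equiv.subRight_apply, jthetaTerm, jthetaTerm, mul_mul_mul_comm, ← sign, ← Complex.exp_add,
    mul_assoc _ _ (cexp _)]
  congr 1
  refine exp_eq_neg_one_zpow_mul_exp ?_
  push_cast
  ring

lemma jtheta_neg_one_div {τ : ℂ} (hτ : 0 < τ.im) (z : ℂ) : jtheta (-1 / τ) (z / τ) =
    -I * (-I * τ) ^ (1 / 2 : ℂ) * cexp (π * I * z ^ 2 / τ) * jtheta τ z := by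
  have hτ0 : τ ≠ 0 := by rintro rfl; simp at hτ
  set w := z + τ / 2 + 1 / 2 with hw
  have shift : jacobiTheta₂ (z / τ + -1 / τ / 2 + 1 / 2) (-1 / τ) =
      cexp (-π * I * (-1 / τ + 2 * (w / τ))) * jacobiTheta₂ (w / τ) (-1 / τ) := by
    rw [← jacobiTheta₂_add_left', hw]
    congr 1
    field_simp
    ring
  have exponents : cexp (π * I * (-1 / τ / 4 + z / τ)) * cexp (-π * I * (-1 / τ + 2 * (w / τ))) =
      -I * (cexp (π * I * z ^ 2 / τ) * cexp (π * I * (τ / 4 + z)) *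
        cexp (-π * I * w ^ 2 / τ)) := by
    rw [← Complex.exp_neg_pi_div_two_mul_I, hw]
    simp only [← Complex.exp_add]
    congr 1
    field_simp
    ring
  rw [jtheta_eq_jacobiTheta₂, jtheta_eq_jacobiTheta₂, jacobiTheta₂_functional_equation w τ, shift,
    ← mul_assoc, exponents]
  field_simp

end JacobiTheta

section Modularity

open UpperHalfPlane hiding I
open EisensteinSeries ModularGroup

/-- The automorphy factor `(c * τ + d) ^ k * exp (2 * π * I * m * c * z ^ 2 / (c * τ + d))` of
Jacobi forms of weight `k` and index `m` in one elliptic variable `z`. -/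
def jacobiFactor (k : ℤ) (m : ℂ) (A : SL2Z) (τ : ℍ) (z : ℂ) : ℂ :=
  denom A τ ^ k * cexp (m * z ^ 2 * D2 A τ)

lemma denom_mul_eq (A B : SL2Z) (τ : ℍ) :
    denom (A * B : SL2Z) τ = denom A ↑(B • τ) * denom B τ := by
  simpa [σ] using denom_cocycle_σ A B τ

lemma D2_mul_apply (A B : SL2Z) (τ : ℍ) :
    D2 (A * B) τ = D2 A (B • τ) / denom B τ ^ 2 + D2 B τ := by
  simp [D2_mul, ModularForm.SL_slash_apply, div_eq_mul_inv]

lemma jacobiFactor_one (k : ℤ) (m : ℂ) (τ : ℍ) (z : ℂ) : jacobiFactor k m 1 τ z = 1 := by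
  simp [jacobiFactor, D2_one]

lemma jacobiFactor_mul (k : ℤ) (m : ℂ) (A B : SL2Z) (τ : ℍ) (z : ℂ) :
    jacobiFactor k m (A * B) τ z =
      jacobiFactor k m A (B • τ) (z / denom B τ) * jacobiFactor k m B τ z := by
  unfold jacobiFactor
  rw [denom_mul_eq, D2_mul_apply, mul_zpow, mul_add, Complex.exp_add]
  ring_nf

/-- The elements of `SL₂(ℤ)` under which `F` transforms as a Jacobi form of weight `k` and index
`m` with trivial character. -/
def jacobiStabilizer (k : ℤ) (m : ℂ) (F : ℍ → ℂ → ℂ) : Subgroup SL2Z where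
  carrier := {A | ∀ τ z, F (A • τ) (z / denom A τ) = jacobiFactor k m A τ z * F τ z}
  one_mem' τ z := by simp [jacobiFactor_one]
  mul_mem' {A B} hA hB τ z := by
    rw [mul_smul, denom_mul_eq, mul_comm, ← div_div, hA, hB, jacobiFactor_mul, mul_assoc]
  inv_mem' {A} hA τ z := by
    have factor_mul := jacobiFactor_mul k m A A⁻¹ τ z
    have denom_mul := denom_mul_eq A A⁻¹ τ
    have transform := hA (A⁻¹ • τ) (z / denom (A⁻¹ : SL2Z) τ)
    rw [mul_inv_cancel, jacobiFactor_one, mul_comm] at factor_mul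
    rw [mul_inv_cancel, mul_comm, map_one, map_one, denom_one] at denom_mul
    rw [smul_inv_smul, div_div, ← denom_mul, div_one] at transform
    rw [transform, ← mul_assoc, ← factor_mul, one_mul]

lemma jacobiStabilizer_eq_top {k : ℤ} {m : ℂ} {F : ℍ → ℂ → ℂ}
    (hS : S ∈ jacobiStabilizer k m F) (hT : T ∈ jacobiStabilizer k m F) :
    jacobiStabilizer k m F = ⊤ := by
  rw [eq_top_iff, ← SpecialLinearGroup.SL2Z_generators, Subgroup.closure_le]
  rintro A (rfl | rfl) <;> assumption

/-- The quotient `θ / η ^ 3`, a weak Jacobi form of weight `-1` and index `1 / 2` whose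
`SL₂(ℤ)`-character is trivial. -/
def thetaDivEtaCubed (τ : ℍ) (z : ℂ) : ℂ := jtheta τ z / dedekindEta τ ^ 3

lemma S_mem_jacobiStabilizer :
    S ∈ jacobiStabilizer (-1) (1 / 2) thetaDivEtaCubed := by
  intro τ z
  have τ_ne_zero := τ.ne_zero
  have sqrt_sq : ((-I * τ) ^ (1 / 2 : ℂ)) ^ 2 = -I * τ := by
    rw [← Complex.cpow_nat_mul]; norm_num
  have coe_S : (↑(S • τ) : ℂ) = -1 / τ := by
    rw [modular_S_smul]
    simp [neg_div]
  rw [denom_S, jacobiFactor, denom_S, D2_S, thetaDivEtaCubed, thetaDivEtaCubed, coe_S,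
    jtheta_neg_one_div τ.im_pos, dedekindEta_neg_one_div τ.im_pos, mul_pow, pow_succ _ 2, sqrt_sq]
  field_simp

lemma T_mem_jacobiStabilizer :
    T ∈ jacobiStabilizer (-1) (1 / 2) thetaDivEtaCubed := by
  intro τ z
  have coe_T : (↑(T • τ) : ℂ) = τ + 1 := by
    rw [modular_T_smul]
    simp [add_comm]
  have denom_T : denom T τ = 1 := by rw [ModularGroup.denom_apply]; simp [T]
  have exp_cubed : cexp (π * I / 12) ^ 3 = cexp (π * I / 4) := by
    rw [← Complex.exp_nat_mul]
    congr 1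
    push_cast
    ring
  simp only [thetaDivEtaCubed, jacobiFactor, denom_T, D2_T, coe_T, jtheta_add_one,
    dedekindEta_add_one, mul_pow, exp_cubed]
  simp [mul_div_mul_left]

lemma thetaDivEtaCubed_smul (A : SL2Z) (τ : ℍ) (z : ℂ) :
    thetaDivEtaCubed (A • τ) (z / denom A τ) =
      jacobiFactor (-1) (1 / 2) A τ z * thetaDivEtaCubed τ z := by
  have mem_top : A ∈ (⊤ : Subgroup SL2Z) := trivial
  rw [← jacobiStabilizer_eq_top S_mem_jacobiStabilizer T_mem_jacobiStabilizer] at mem_top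
  exact mem_top τ z

end Modularity

section GramMatrix

lemma bilinC_A2 (x y : Fin 2 → ℂ) : bilinC !![2, 1; 1, 2] x y =
    2 * x 0 * y 0 + x 0 * y 1 + x 1 * y 0 + 2 * x 1 * y 1 := by
  simp [bilinC, Fin.sum_univ_two]
  ring

lemma bilinQ_A2 (x y : Fin 2 → ℚ) : bilinQ !![2, 1; 1, 2] x y =
    2 * x 0 * y 0 + x 0 * y 1 + x 1 * y 0 + 2 * x 1 * y 1 := by
  simp [bilinQ, Fin.sum_univ_two]
  ring

lemma bilinZ_A2 (x y : Fin 2 → ℤ) : bilinZ !![2, 1; 1, 2] x y =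
    2 * x 0 * y 0 + x 0 * y 1 + x 1 * y 0 + 2 * x 1 * y 1 := by
  simp [bilinZ, Fin.sum_univ_two]
  ring

end GramMatrix

section Holomorphy

variable {E : Type*} [NormedAddCommGroup E] [NormedSpace ℂ E] {p : E} {t u : E → ℂ}

lemma differentiableAt_jtheta_comp (ht_im : 0 < (t p).im) (ht : DifferentiableAt ℂ t p)
    (hu : DifferentiableAt ℂ u p) : DifferentiableAt ℂ (fun q => jtheta (t q) (u q)) p :=
  (differentiableAt_jtheta ht_im (u p)).comp p (f := fun q => (t q, u q)) (ht.prodMk hu)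

lemma differentiableOn_sigmaA2 :
    DifferentiableOn ℂ (fun p : ℂ × (Fin 2 → ℂ) => sigmaA2 p.1 p.2) {p | 0 < p.1.im} := by
  intro p hp
  have hη : DifferentiableAt ℂ (fun q : ℂ × (Fin 2 → ℂ) => dedekindEta q.1) p :=
    (differentiableAt_dedekindEta hp).comp p (f := Prod.fst) differentiableAt_fst
  have hθ {u : ℂ × (Fin 2 → ℂ) → ℂ} (hu : DifferentiableAt ℂ u p) :
      DifferentiableAt ℂ (fun q => jtheta q.1 (u q)) p :=
    differentiableAt_jtheta_comp hp differentiableAt_fst hu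
  have hz (i : Fin 2) : DifferentiableAt ℂ (fun q : ℂ × (Fin 2 → ℂ) => q.2 i) p := by fun_prop
  have hprod := ((hθ (hz 0)).mul (hθ (hz 1))).mul (hθ ((hz 0).add (hz 1)))
  have hη_inv := hη.inv (h := fun q : ℂ × (Fin 2 → ℂ) => dedekindEta q.1) (dedekindEta_ne_zero hp)
  exact (hprod.mul hη_inv).differentiableWithinAt

end Holomorphy

section Transformation

open UpperHalfPlane hiding I
open EisensteinSeries

lemma sigmaA2_eq_dedekindEta_pow_mul (τ : ℍ) (z : Fin 2 → ℂ) :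
    sigmaA2 τ z = dedekindEta τ ^ 8 * (thetaDivEtaCubed τ (z 0) * thetaDivEtaCubed τ (z 1) *
      thetaDivEtaCubed τ (z 0 + z 1)) := by
  have := dedekindEta_ne_zero τ.im_pos
  simp only [sigmaA2, thetaDivEtaCubed]
  field_simp

lemma jacobiFactor_mul_jacobiFactor_mul_jacobiFactor (A : SL2Z) (τ : ℍ) (z : Fin 2 → ℂ) :
    jacobiFactor (-1) (1 / 2) A τ (z 0) * jacobiFactor (-1) (1 / 2) A τ (z 1) *
        jacobiFactor (-1) (1 / 2) A τ (z 0 + z 1) =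
      (denom A τ ^ 3)⁻¹ * cexp (bilinC !![2, 1; 1, 2] z z / 2 * D2 A τ) := by
  have exponents : bilinC !![2, 1; 1, 2] z z / 2 * D2 A τ = 1 / 2 * z 0 ^ 2 * D2 A τ +
      1 / 2 * z 1 ^ 2 * D2 A τ + 1 / 2 * (z 0 + z 1) ^ 2 * D2 A τ := by
    rw [bilinC_A2]
    ring
  rw [exponents, Complex.exp_add, Complex.exp_add]
  simp only [jacobiFactor, _root_.zpow_neg_one]
  ring

lemma sigmaA2_smul {A : SL2Z} {τ : ℍ} {χ : ℂ}
    (hχ : dedekindEta ↑(A • τ) ^ 8 = χ * denom A τ ^ 4 * dedekindEta τ ^ 8) (z : Fin 2 → ℂ) :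
    sigmaA2 ↑(A • τ) (fun i => z i / denom A τ) =
      χ * denom A τ * cexp (bilinC !![2, 1; 1, 2] z z / 2 * D2 A τ) * sigmaA2 τ z := by
  rw [sigmaA2_eq_dedekindEta_pow_mul, sigmaA2_eq_dedekindEta_pow_mul, ← add_div, hχ]
  have factors := jacobiFactor_mul_jacobiFactor_mul_jacobiFactor A τ z
  simp only [thetaDivEtaCubed_smul]
  calc _ = χ * denom A τ ^ 4 * (jacobiFactor (-1) (1 / 2) A τ (z 0) *
        jacobiFactor (-1) (1 / 2) A τ (z 1) * jacobiFactor (-1) (1 / 2) A τ (z 0 + z 1)) *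
        (dedekindEta τ ^ 8 * (thetaDivEtaCubed τ (z 0) * thetaDivEtaCubed τ (z 1) *
          thetaDivEtaCubed τ (z 0 + z 1))) := by ring
    _ = _ := by rw [factors]; field_simp

lemma sigmaA2_moebius {A : SL2Z} {τ χ : ℂ} (hτ : 0 < τ.im)
    (hχ : dedekindEta ((A.1 0 0 * τ + A.1 0 1) / (A.1 1 0 * τ + A.1 1 1)) ^ 8 =
      χ * (A.1 1 0 * τ + A.1 1 1) ^ 4 * dedekindEta τ ^ 8) (z : Fin 2 → ℂ) :
    sigmaA2 ((A.1 0 0 * τ + A.1 0 1) / (A.1 1 0 * τ + A.1 1 1))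
        (fun i => z i / (A.1 1 0 * τ + A.1 1 1)) =
      χ * (A.1 1 0 * τ + A.1 1 1) *
        cexp (π * I * A.1 1 0 * bilinC !![2, 1; 1, 2] z z / (A.1 1 0 * τ + A.1 1 1)) *
        sigmaA2 τ z := by
  have coe_smul := coe_specialLinearGroup_apply A ⟨τ, hτ⟩
  have denom_eq := ModularGroup.denom_apply A ⟨τ, hτ⟩
  simp only [algebraMap_int_eq, eq_intCast, ofReal_intCast] at coe_smul denom_eq
  have exponent : bilinC !![2, 1; 1, 2] z z / 2 * D2 A ⟨τ, hτ⟩ =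
      π * I * A.1 1 0 * bilinC !![2, 1; 1, 2] z z / (A.1 1 0 * τ + A.1 1 1) := by
    rw [D2, denom_eq]
    ring
  have transform := sigmaA2_smul (A := A) (τ := ⟨τ, hτ⟩) (χ := χ) (by rwa [coe_smul, denom_eq]) z
  rwa [exponent, coe_smul, denom_eq] at transform

lemma sigmaA2_add_mul_add (x y : Fin 2 → ℤ) (τ : ℂ) (z : Fin 2 → ℂ) :
    sigmaA2 τ (fun i => z i + x i * τ + y i) =
      cexp (-(π * I) * (bilinZ !![2, 1; 1, 2] x x * τ +
        2 * bilinC !![2, 1; 1, 2] (fun i => x i) z)) * sigmaA2 τ z := by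
  have signs : (-1 : ℂ) ^ (x 0 + y 0) * (-1) ^ (x 1 + y 1) * (-1) ^ (x 0 + x 1 + (y 0 + y 1)) =
      1 := by
    simp only [← zpow_add₀ (neg_ne_zero.mpr (one_ne_zero (α := ℂ)))]
    exact Even.neg_one_zpow ⟨x 0 + x 1 + y 0 + y 1, by ring⟩
  let e (n : ℤ) (w : ℂ) : ℂ := cexp (-(π * I) * (n ^ 2 * τ + 2 * n * w))
  have jtheta_shift (n k : ℤ) (w : ℂ) :
      jtheta τ (w + n * τ + k) = (-1) ^ (n + k) * e n w * jtheta τ w :=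
    jtheta_add_intCast_mul_add_intCast τ w n k
  have exp_eq_mul : cexp (-(π * I) * (bilinZ !![2, 1; 1, 2] x x * τ +
      2 * bilinC !![2, 1; 1, 2] (fun i => x i) z)) =
      e (x 0) (z 0) * e (x 1) (z 1) * e (x 0 + x 1) (z 0 + z 1) := by
    rw [bilinZ_A2, bilinC_A2, ← Complex.exp_add, ← Complex.exp_add]
    congr 1
    push_cast
    ring
  have arg_add : z 0 + x 0 * τ + y 0 + (z 1 + x 1 * τ + y 1) =
      z 0 + z 1 + (x 0 + x 1 : ℤ) * τ + (y 0 + y 1 : ℤ) := by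
    push_cast
    ring
  simp only [sigmaA2]
  rw [arg_add, exp_eq_mul, jtheta_shift, jtheta_shift, jtheta_shift]
  linear_combination (e (x 0) (z 0) * e (x 1) (z 1) * e (x 0 + x 1) (z 0 + z 1) *
    (jtheta τ (z 0) * jtheta τ (z 1) * jtheta τ (z 0 + z 1) / dedekindEta τ)) * signs

end Transformation

section FourierExpansion

/-- The exponential `exp (2 * π * I * (n * τ + l₁ * z₁ + l₂ * z₂))` occurring in the Fourier
expansion of `sigmaA2`, whose exponent `n = (l₁ ^ 2 - l₁ * l₂ + l₂ ^ 2) / 3` is half the norm of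
`l`. -/
def fourierExpA2 (τ : ℂ) (z : Fin 2 → ℂ) (l : ℤ × ℤ) : ℂ :=
  cexp (2 * π * I * ((l.1 ^ 2 - l.1 * l.2 + l.2 ^ 2) / 3 * τ + l.1 * z 0 + l.2 * z 1))

lemma jthetaTerm_mul_jthetaTerm_mul_jthetaTerm (τ : ℂ) (z : Fin 2 → ℂ) (l : ℤ × ℤ) (m : ℤ) :
    jthetaTerm τ (z 0) (l.1 - (m + 1)) * jthetaTerm τ (z 1) (l.2 - (m + 1)) *
        jthetaTerm τ (z 0 + z 1) m =
      fourierExpA2 τ z l *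
        ((-1) ^ (l.1 + l.2) * alternatingThetaTerm (3 - 2 * (l.1 + l.2)) τ m) := by
  have signs : (-1 : ℂ) ^ (l.1 - (m + 1)) * (-1) ^ (l.2 - (m + 1)) * (-1) ^ m =
      (-1) ^ (l.1 + l.2) * (-1) ^ m := by
    simp only [← zpow_add₀ (neg_ne_zero.mpr (one_ne_zero (α := ℂ)))]
    exact neg_one_zpow_congr ⟨-(m + 1), by ring⟩
  simp only [jthetaTerm, alternatingThetaTerm, fourierExpA2]
  rw [mul_mul_mul_comm ((-1) ^ (l.1 - (m + 1))), mul_mul_mul_comm (_ * _), signs,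
    mul_assoc ((-1) ^ (l.1 + l.2)), mul_left_comm (cexp _),
    mul_left_comm (cexp _), ← Complex.exp_add, ← Complex.exp_add, ← Complex.exp_add]
  congr 3
  push_cast
  ring

lemma hasSum_jtheta_mul_jtheta_mul_jtheta {τ : ℂ} (hτ : 0 < τ.im) (z : Fin 2 → ℂ) :
    HasSum (fun p : (ℤ × ℤ) × ℤ => jthetaTerm τ (z 0) p.1.1 * jthetaTerm τ (z 1) p.1.2 *
        jthetaTerm τ (z 0 + z 1) p.2)
      (jtheta τ (z 0) * jtheta τ (z 1) * jtheta τ (z 0 + z 1)) := by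
  have h₀ := hasSum_jtheta hτ (z 0)
  have h₁ := hasSum_jtheta hτ (z 1)
  have h₂ := hasSum_jtheta hτ (z 0 + z 1)
  have summable₀₁ : Summable fun p : ℤ × ℤ =>
      jthetaTerm τ (z 0) p.1 * jthetaTerm τ (z 1) p.2 :=
    summable_mul_of_summable_norm h₀.summable.norm h₁.summable.norm
  have summable₀₁₂ : Summable fun p : (ℤ × ℤ) × ℤ =>
      jthetaTerm τ (z 0) p.1.1 * jthetaTerm τ (z 1) p.1.2 * jthetaTerm τ (z 0 + z 1) p.2 :=
    summable_mul_of_summable_norm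
      (f := fun p : ℤ × ℤ => jthetaTerm τ (z 0) p.1 * jthetaTerm τ (z 1) p.2)
      summable₀₁.norm h₂.summable.norm
  exact (h₀.mul h₁ summable₀₁).mul h₂ summable₀₁₂

/-- The change of summation variables `((l₁, l₂), m) ↦ ((l₁ - (m + 1), l₂ - (m + 1)), m)` collecting
the terms of a product of three theta series with the same `fourierExpA2`. -/
def fourierReindexA2 : (ℤ × ℤ) × ℤ ≃ (ℤ × ℤ) × ℤ :=
  (Equiv.prodComm _ _).trans
    ((Equiv.prodShear (Equiv.refl ℤ) fun m => Equiv.subRight (m + 1, m + 1)).trans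
      (Equiv.prodComm _ _))

lemma hasSum_sigmaA2 {τ : ℂ} (hτ : 0 < τ.im) (z : Fin 2 → ℂ) :
    HasSum (fun l : ℤ × ℤ => -legendreSym 3 (l.1 + l.2) * fourierExpA2 τ z l) (sigmaA2 τ z) := by
  have reindexed := fourierReindexA2.hasSum_iff.mpr (hasSum_jtheta_mul_jtheta_mul_jtheta hτ z)
  have triple := reindexed.congr_fun fun p =>
    (jthetaTerm_mul_jthetaTerm_mul_jthetaTerm τ z p.1 p.2).symm
  have fibrewise := triple.prod_fiberwise fun l => (triple.summable.prod_factor l).hasSum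
  refine (fibrewise.div_const (dedekindEta τ)).congr_fun fun l => ?_
  have := dedekindEta_ne_zero hτ
  simp only [tsum_mul_left]
  rw [← alternatingTheta, neg_one_zpow_mul_alternatingTheta hτ]
  field_simp

/-- The index `(n, v)` of the Fourier expansion of a Jacobi form for `A₂` corresponding to
`fourierExpA2 _ _ l`: `v` is the vector of the dual lattice, in lattice coordinates, whose inner
products with the two basis vectors are `l.1` and `l.2`, and `n` is half the norm of `v`. -/
def fourierIndexA2 (l : ℤ × ℤ) : ℚ × (Fin 2 → ℚ) :=
  ((l.1 ^ 2 - l.1 * l.2 + l.2 ^ 2) / 3, ![(2 * l.1 - l.2) / 3, (2 * l.2 - l.1) / 3])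

lemma bilinQ_fourierIndexA2 (l : ℤ × ℤ) (x : Fin 2 → ℚ) :
    bilinQ !![2, 1; 1, 2] (fourierIndexA2 l).2 x = l.1 * x 0 + l.2 * x 1 := by
  rw [bilinQ_A2]
  simp only [fourierIndexA2, cons_val_zero, cons_val_one]
  ring

lemma bilinC_fourierIndexA2 (l : ℤ × ℤ) (z : Fin 2 → ℂ) :
    bilinC !![2, 1; 1, 2] (fun i => (fourierIndexA2 l).2 i) z = l.1 * z 0 + l.2 * z 1 := by
  rw [bilinC_A2]
  simp only [fourierIndexA2, cons_val_zero, cons_val_one]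
  push_cast
  ring

lemma two_mul_fourierIndexA2_fst (l : ℤ × ℤ) : 2 * (fourierIndexA2 l).1 =
    bilinQ !![2, 1; 1, 2] (fourierIndexA2 l).2 (fourierIndexA2 l).2 := by
  rw [bilinQ_fourierIndexA2]
  simp only [fourierIndexA2, cons_val_zero, cons_val_one]
  ring

lemma fourierIndexA2_fst_nonneg (l : ℤ × ℤ) : 0 ≤ (fourierIndexA2 l).1 := by
  have : (0 : ℚ) ≤ l.1 ^ 2 - l.1 * l.2 + l.2 ^ 2 := by
    nlinarith [sq_nonneg ((l.1 : ℚ) - l.2), sq_nonneg ((l.1 : ℚ) + l.2)]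
  exact div_nonneg this (by norm_num)

lemma inHalfDual_fourierIndexA2 (l : ℤ × ℤ) :
    InHalfDual !![2, 1; 1, 2] (fourierIndexA2 l).2 := fun x =>
  ⟨2 * (l.1 * x 0 + l.2 * x 1), by rw [bilinQ_fourierIndexA2]; push_cast; rfl⟩

lemma fourierIndexA2_injective : Function.Injective fourierIndexA2 := by
  intro l l' h
  have pairing (x : Fin 2 → ℚ) : (l.1 : ℚ) * x 0 + l.2 * x 1 = l'.1 * x 0 + l'.2 * x 1 := by
    rw [← bilinQ_fourierIndexA2, h, bilinQ_fourierIndexA2]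
  ext
  · simpa using pairing ![1, 0]
  · simpa using pairing ![0, 1]

/-- The Fourier coefficients of `sigmaA2`, supported on the range of `fourierIndexA2`. -/
def fourierCoeffA2 : ℚ × (Fin 2 → ℚ) → ℂ :=
  Function.extend fourierIndexA2 (fun l => -legendreSym 3 (l.1 + l.2)) 0

lemma fourierCoeffA2_eq_zero {p : ℚ × (Fin 2 → ℚ)} (hp : p ∉ Set.range fourierIndexA2) :
    fourierCoeffA2 p = 0 :=
  Function.extend_apply' _ _ _ hp

lemma mem_range_fourierIndexA2 {p : ℚ × (Fin 2 → ℚ)} (hp : fourierCoeffA2 p ≠ 0) :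
    ∃ l, fourierIndexA2 l = p :=
  not_imp_comm.mp fourierCoeffA2_eq_zero hp

lemma hasSum_fourierCoeffA2 {τ : ℂ} (hτ : 0 < τ.im) (z : Fin 2 → ℂ) :
    HasSum (fun p => fourierCoeffA2 p *
      cexp (2 * π * I * (p.1 * τ + bilinC !![2, 1; 1, 2] (fun i => p.2 i) z))) (sigmaA2 τ z) := by
  rw [← fourierIndexA2_injective.hasSum_iff fun p hp => by
    rw [fourierCoeffA2_eq_zero hp, zero_mul]]
  refine (hasSum_sigmaA2 hτ z).congr_fun fun l => ?_
  rw [Function.comp_apply, fourierCoeffA2, fourierIndexA2_injective.extend_apply,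
    bilinC_fourierIndexA2, fourierExpA2, fourierIndexA2, ← add_assoc]
  push_cast
  rfl

end FourierExpansion

/-- `σ_{A₂}` is a holomorphic Jacobi form of singular weight `1` and
index `1` for the root lattice `A₂` (Gram matrix `!![2,1;1,2]`) with character `v_η^8` and
trivial Heisenberg character; its Fourier support satisfies `2n = (ℓ,ℓ)` (singular weight). -/
theorem statement15
    (vη8 : SL2Z → ℂ)
    (hvη8 : ∀ A : SL2Z, ∀ τ : ℂ, 0 < τ.im →
      dedekindEta (((A.1 0 0 : ℂ) * τ + (A.1 0 1 : ℂ)) / ((A.1 1 0 : ℂ) * τ + (A.1 1 1 : ℂ))) ^ 8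
        = vη8 A * ((A.1 1 0 : ℂ) * τ + (A.1 1 1 : ℂ)) ^ 4 * dedekindEta τ ^ 8) :
    ∃ g : ℚ × (Fin 2 → ℚ) → ℂ,
      IsJacobiForm !![2, 1; 1, 2] 1 1 vη8 (fun _ _ => 1) g sigmaA2 ∧
      ∀ p, g p ≠ 0 → 2 * p.1 = bilinQ !![2, 1; 1, 2] p.2 p.2 := by
  refine ⟨fourierCoeffA2, ?_, fun p hp => ?_⟩
  · constructor
    case holo => exact differentiableOn_sigmaA2
    case modular =>
      intro A τ hτ z
      simpa only [Rat.cast_one, Complex.cpow_one, mul_one] using sigmaA2_moebius hτ (hvη8 A τ hτ) z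
    case elliptic =>
      intro x y τ _ z
      simpa only [Rat.cast_one, mul_one, one_mul] using sigmaA2_add_mul_add x y τ z
    case support =>
      intro p hp
      obtain ⟨l, rfl⟩ := mem_range_fourierIndexA2 hp
      refine ⟨fourierIndexA2_fst_nonneg l, inHalfDual_fourierIndexA2 l, ?_⟩
      rw [mul_one, two_mul_fourierIndexA2_fst, sub_self]
    case expansion => exact fun τ hτ z => hasSum_fourierCoeffA2 hτ z
  · obtain ⟨l, rfl⟩ := mem_range_fourierIndexA2 hp
    exact two_mul_fourierIndexA2_fst l
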